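/- arXiv:0803.0073 — 2 statements merged into one kernel-verified Lean document; each statement's English description precedes it below -/
import Mathlib

section
/- Let A be a unital C*-algebra and T : A → A a Markov operator. Suppose every state on the fixed point subspace A^T = {x : T x = x} has a unique T-invariant state extension to A. If h is a bounded linear functional on A with h ∘ T = h and h vanishing on A^T, then h = 0. -/
/-!
A bounded invariant functional `h` is determined by the real functionals `Re h` and `Im h` on the
self-adjoint part of `A`, which are again invariant and vanish on the self-adjoint fixed points.
So it suffices to treat an invariant bounded real functional `u` on `selfAdjoint A`.

* `exists_pos_sub_pos`: `u = p₀ - q₀` with `p₀`, `q₀` positive. This is the existence half of the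
  Jordan decomposition, without control of the norms, and follows from the M. Riesz extension
  theorem.
* `exists_invariant_mean`: the Cesàro means of a positive functional along `T` converge along an
  ultrafilter to a positive `T`-invariant functional. Applied to `p₀` and `q₀` this gives
  `u = p - q` with `p`, `q` positive and invariant, since `u` equals its own Cesàro means. Thus
  neither minimality nor uniqueness of the Jordan decomposition is needed.

As `u` vanishes on fixed points, `p` and `q` agree there, in particular `p 1 = q 1`. If `p 1 = 0`,
then `p = q = 0`. Otherwise `p / p 1` and `q / p 1` extend to invariant states on `A` which agree on
the fixed point space, so they coincide by the uniqueness hypothesis, and `u = 0`.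
-/

open scoped ComplexOrder

section Auxiliary

open Filter Topology

variable {A : Type*} [CStarAlgebra A] [PartialOrder A] [StarOrderedRing A]


/-- Every bounded real functional on the self-adjoint part is a difference of two positive ones.
The pair `(p, q)` is obtained as a positive functional on the product: on triples `(a, b, t)`,
ordered by `0 ≤ a + t`, `0 ≤ b + t`, `0 ≤ t`, the functional `(a, -a, t) ↦ u a + 3 |M| t` is
positive, and a positive extension restricts to `p` on `(a, 0, 0)` and to `q` on `(0, b, 0)`. -/
lemma exists_pos_sub_pos (u : selfAdjoint A →ₗ[ℝ] ℝ) (M : ℝ) (hM : ∀ x, |u x| ≤ M * ‖(x : A)‖) :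
    ∃ p q : selfAdjoint A →ₗ[ℝ] ℝ, (∀ x : selfAdjoint A, 0 ≤ (x : A) → 0 ≤ p x) ∧
      (∀ x : selfAdjoint A, 0 ≤ (x : A) → 0 ≤ q x) ∧
      ∀ x, u x = p x - q x := by
  have hM0 : ∀ x : selfAdjoint A, |u x| ≤ |M| * ‖(x : A)‖ := fun x =>
    (hM x).trans (by gcongr; exact le_abs_self M)
  let C : PointedCone ℝ (selfAdjoint A × selfAdjoint A × ℝ) :=
    { carrier := {v | 0 ≤ (v.1 : A) + algebraMap ℝ A v.2.2 ∧
        0 ≤ (v.2.1 : A) + algebraMap ℝ A v.2.2 ∧ 0 ≤ v.2.2}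
      add_mem' := by
        rintro a b ⟨h1, h2, h3⟩ ⟨h4, h5, h6⟩
        refine ⟨?_, ?_, add_nonneg h3 h6⟩
        · have := add_nonneg h1 h4
          simp only [Prod.fst_add, Prod.snd_add, AddSubgroup.coe_add, map_add]
          convert this using 1; abel
        · have := add_nonneg h2 h5
          simp only [Prod.fst_add, Prod.snd_add, AddSubgroup.coe_add, map_add]
          convert this using 1; abel
      zero_mem' := by simp
      smul_mem' := by
        rintro ⟨c, hc⟩ a ⟨h1, h2, h3⟩
        refine ⟨?_, ?_, mul_nonneg hc h3⟩
        · have := smul_nonneg hc h1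
          simpa [smul_add, Algebra.algebraMap_eq_smul_one, mul_smul, Subtype.ext_iff] using! this
        · have := smul_nonneg hc h2
          simpa [smul_add, Algebra.algebraMap_eq_smul_one, mul_smul] using! this }
  let φ : selfAdjoint A × selfAdjoint A × ℝ →ₗ[ℝ] ℝ :=
    u ∘ₗ LinearMap.fst ℝ _ _ + (3 * |M|) • (LinearMap.snd ℝ _ _ ∘ₗ LinearMap.snd ℝ _ _)
  let D : Submodule ℝ (selfAdjoint A × selfAdjoint A × ℝ) :=
    LinearMap.ker (LinearMap.fst ℝ _ _ + LinearMap.fst ℝ _ _ ∘ₗ LinearMap.snd ℝ _ _)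
  obtain ⟨g, hg, hpos⟩ := riesz_extension C ⟨D, φ.domRestrict D⟩ (by
      rintro ⟨⟨a, b, t⟩, hv⟩ ⟨h1, h2, h3⟩
      have hb : b = -a := by
        have : a + b = 0 := hv
        exact (neg_eq_of_add_eq_zero_right this).symm
      subst hb
      simp only [AddSubgroup.coe_neg] at h1 h2 h3
      change 0 ≤ u a + (3 * |M|) * t
      -- `-t ≤ a ≤ t` gives `‖a + t‖ ≤ 2t`, hence the crude bound `‖a‖ ≤ 3t` that the constant `3`
      -- in `φ` is made for.
      have h4 : ‖(a : A) + algebraMap ℝ A t‖ ≤ 2 * t := by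
        refine ((CStarAlgebra.norm_le_iff_le_algebraMap _ (by positivity) h1).2 ?_)
        rw [two_mul, map_add]
        gcongr
        rwa [neg_add_eq_sub, sub_nonneg] at h2
      have h5 : ‖(a : A)‖ ≤ 3 * t := by
        have h6 : ‖algebraMap ℝ A t‖ ≤ t := by
          refine (CStarAlgebra.norm_le_iff_le_algebraMap _ h3 ?_).2 le_rfl
          exact algebraMap_nonneg A h3
        calc ‖(a : A)‖ = ‖((a : A) + algebraMap ℝ A t) - algebraMap ℝ A t‖ := by simp
          _ ≤ _ := norm_sub_le _ _
          _ ≤ 3 * t := by linarith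
      have h7 := hM0 a
      have h8 := neg_abs_le (u a)
      have h9 := mul_le_mul_of_nonneg_left h5 (abs_nonneg M)
      linarith) (by
      rintro ⟨a, b, t⟩
      refine ⟨⟨(0, 0, -t + ‖(a : A)‖ + ‖(b : A)‖), by simp [D]⟩, ?_⟩
      have ha := a.2.neg_algebraMap_norm_le_self
      have hb := b.2.neg_algebraMap_norm_le_self
      have ha' := algebraMap_nonneg A (norm_nonneg (a : A))
      have hb' := algebraMap_nonneg A (norm_nonneg (b : A))
      rw [neg_le_iff_add_nonneg] at ha hb
      refine ⟨?_, ?_, ?_⟩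
      · have := add_nonneg ha hb'
        simp only [Prod.mk_add_mk, zero_add, map_add, map_neg]
        convert this using 1; abel
      · have := add_nonneg hb ha'
        simp only [Prod.mk_add_mk, zero_add, map_add, map_neg]
        convert this using 1; abel
      · have := add_nonneg (norm_nonneg (a : A)) (norm_nonneg (b : A))
        simp only [Prod.mk_add_mk]
        linarith)
  refine ⟨g ∘ₗ LinearMap.inl ℝ _ _, g ∘ₗ LinearMap.inr ℝ _ _ ∘ₗ LinearMap.inl ℝ _ _, ?_, ?_, ?_⟩
  · intro x hx
    exact hpos _ ⟨by simpa using hx, by simp, le_rfl⟩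
  · intro x hx
    exact hpos _ ⟨by simp, by simpa using hx, le_rfl⟩
  · intro x
    have h1 := hg ⟨(x, -x, 0), by simp [D]⟩
    have h2 : ((x, -x, 0) : selfAdjoint A × selfAdjoint A × ℝ) = (x, 0, 0) - (0, x, 0) := by simp
    have h3 : φ (x, -x, 0) = u x := by simp [φ]
    simp only [LinearMap.comp_apply, LinearMap.inl_apply, LinearMap.inr_apply]
    rw [← h3]
    change _ = φ (x, -x, 0) at h1
    rw [← h1]
    simp only [h2, map_sub]
    rfl

lemma abs_le_of_pos (p : selfAdjoint A →ₗ[ℝ] ℝ) (hp : ∀ x : selfAdjoint A, 0 ≤ (x : A) → 0 ≤ p x)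
    (x : selfAdjoint A) : |p x| ≤ p 1 * ‖(x : A)‖ := by
  have h1 := x.2.neg_algebraMap_norm_le_self
  have h2 := x.2.le_algebraMap_norm_self
  have h3 := hp (‖(x : A)‖ • 1 - x) (by
    simpa [Algebra.algebraMap_eq_smul_one] using h2)
  have h4 := hp (‖(x : A)‖ • 1 + x) (by
    rw [neg_le_iff_add_nonneg] at h1
    simpa [Algebra.algebraMap_eq_smul_one, add_comm] using h1)
  simp only [map_sub, map_add, map_smul, smul_eq_mul] at h3 h4
  rw [abs_le]
  constructor <;> linarith

/-- The Cesàro mean `(n + 1)⁻¹ ∑ k ≤ n, p ∘ S ^ k` of a functional `p` along `S`. The average has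
`n + 1` terms so that it is never over an empty range. -/
noncomputable def cesaro (S : selfAdjoint A →ₗ[ℝ] selfAdjoint A) (p : selfAdjoint A →ₗ[ℝ] ℝ)
    (n : ℕ) : selfAdjoint A →ₗ[ℝ] ℝ :=
  ((n : ℝ) + 1)⁻¹ • ∑ k ∈ Finset.range (n + 1), p ∘ₗ S ^ k

/-- The Cesàro means of a positive functional along a positive unital map converge pointwise, along
a fixed free ultrafilter, to a positive invariant functional. The ultrafilter does not depend on `p`,
so that the limits of two functionals can be subtracted. -/
lemma exists_invariant_mean (S : selfAdjoint A →ₗ[ℝ] selfAdjoint A)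
    (hS : ∀ x : selfAdjoint A, 0 ≤ (x : A) → 0 ≤ (S x : A)) (hS1 : S 1 = 1)
    (p : selfAdjoint A →ₗ[ℝ] ℝ) (hp : ∀ x : selfAdjoint A, 0 ≤ (x : A) → 0 ≤ p x) :
    ∃ p' : selfAdjoint A →ₗ[ℝ] ℝ, (∀ x : selfAdjoint A, 0 ≤ (x : A) → 0 ≤ p' x) ∧
      (∀ x, p' (S x) = p' x) ∧
      ∀ x, Tendsto (fun n => cesaro S p n x) (hyperfilter ℕ) (𝓝 (p' x)) := by
  have hSk : ∀ k : ℕ, ∀ x : selfAdjoint A, 0 ≤ (x : A) → 0 ≤ ((S ^ k) x : A) := by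
    intro k
    induction k with
    | zero => simp
    | succ k ih => intro x hx; rw [pow_succ]; exact ih _ (hS x hx)
  have hSk1 : ∀ k : ℕ, (S ^ k) 1 = 1 := by
    intro k
    induction k with
    | zero => simp
    | succ k ih => rw [pow_succ, Module.End.mul_apply, hS1, ih]
  have hbk : ∀ k : ℕ, ∀ x, |p ((S ^ k) x)| ≤ p 1 * ‖(x : A)‖ := by
    intro k x
    have := abs_le_of_pos (p ∘ₗ S ^ k) (fun x hx => hp _ (hSk k x hx)) x
    simpa [hSk1] using this
  have hpos : ∀ n, ∀ x : selfAdjoint A, 0 ≤ (x : A) → 0 ≤ cesaro S p n x := by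
    intro n x hx
    simp only [cesaro, LinearMap.smul_apply, LinearMap.sum_apply, smul_eq_mul]
    exact mul_nonneg (by positivity) (Finset.sum_nonneg fun k _ => hp _ (hSk k x hx))
  have hb : ∀ n x, |cesaro S p n x| ≤ p 1 * ‖(x : A)‖ := by
    intro n x
    have h1 : cesaro S p n 1 = p 1 := by
      simp only [cesaro, LinearMap.smul_apply, LinearMap.sum_apply, smul_eq_mul,
        LinearMap.comp_apply, hSk1]
      simp
      field_simp
    simpa [h1] using abs_le_of_pos _ (hpos n) x
  have hlim : ∀ x, ∃ l, Tendsto (fun n => cesaro S p n x) (hyperfilter ℕ) (𝓝 l) := by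
    intro x
    obtain ⟨l, -, hl⟩ := (isCompact_Icc (a := -(p 1 * ‖(x : A)‖)) (b := p 1 * ‖(x : A)‖)
      ).ultrafilter_le_nhds ((hyperfilter ℕ).map fun n => cesaro S p n x) (by
        rw [le_principal_iff]
        exact Filter.Eventually.of_forall (f := (hyperfilter ℕ : Filter ℕ))
          fun n => abs_le.1 (hb n x))
    exact ⟨l, hl⟩
  choose l hl using hlim
  refine ⟨⟨⟨l, ?_⟩, ?_⟩, ?_, ?_, hl⟩
  · intro x y
    refine tendsto_nhds_unique (hl _) ?_
    simpa only [map_add] using (hl x).add (hl y)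
  · intro c x
    refine tendsto_nhds_unique (hl _) ?_
    simpa only [map_smul, RingHom.id_apply] using (hl x).const_smul c
  · intro x hx
    exact ge_of_tendsto' (hl x) fun n => hpos n x hx
  · intro x
    change l (S x) = l x
    have h0 : Tendsto (fun n => cesaro S p n (S x) - cesaro S p n x) atTop (𝓝 0) := by
      have h2 : Tendsto (fun n : ℕ => (1 / ((n : ℝ) + 1)) * (2 * (p 1 * ‖(x : A)‖))) atTop (𝓝 0) := by
        simpa using (tendsto_one_div_add_atTop_nhds_zero_nat (𝕜 := ℝ)).mul_const
          (2 * (p 1 * ‖(x : A)‖))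
      refine squeeze_zero_norm (fun n => ?_) h2
      -- The difference telescopes.
      have : cesaro S p n (S x) - cesaro S p n x
          = (1 / ((n : ℝ) + 1)) * (p ((S ^ (n + 1)) x) - p x) := by
        simp only [cesaro, LinearMap.smul_apply, LinearMap.sum_apply, smul_eq_mul,
          LinearMap.comp_apply, ← mul_sub, ← Finset.sum_sub_distrib, one_div]
        congr 1
        have := Finset.sum_range_sub (fun k => p ((S ^ k) x)) (n + 1)
        simpa [pow_succ] using this
      rw [this, norm_mul, Real.norm_of_nonneg (by positivity)]
      gcongr
      have h3 := hbk (n + 1) x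
      have h4 := hbk 0 x
      have h5 := abs_sub (p ((S ^ (n + 1)) x)) (p x)
      simp only [pow_zero, Module.End.one_apply] at h4
      rw [Real.norm_eq_abs]
      linarith
    have h6 := (hl (S x)).sub (hl x)
    have h7 := tendsto_nhds_unique h6 (h0.mono_left Nat.hyperfilter_le_atTop)
    linarith

/-- The complex-linear extension `a ↦ p (ℜ a) + i p (ℑ a)` of a positive real functional on the
self-adjoint part, as a bounded functional on `A`. -/
noncomputable def complexify (p : selfAdjoint A →ₗ[ℝ] ℝ)
    (hp : ∀ x : selfAdjoint A, 0 ≤ (x : A) → 0 ≤ p x) : A →L[ℂ] ℂ :=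
  LinearMap.mkContinuous
    { toFun := fun a => (p (realPart a) : ℂ) + Complex.I * p (imaginaryPart a)
      map_add' := fun a b => by simp only [map_add, Complex.ofReal_add]; ring
      map_smul' := fun z a => by
        simp only [realPart_smul, imaginaryPart_smul, map_add, map_sub, map_smul, smul_eq_mul,
          RingHom.id_apply]
        apply Complex.ext <;> simp }
    (2 * p 1) (fun a => by
      have h0 : 0 ≤ p 1 := hp 1 (by simp)
      have h1 := (abs_le_of_pos p hp (realPart a)).trans
        (mul_le_mul_of_nonneg_left (realPart.norm_le a) h0)
      have h2 := (abs_le_of_pos p hp (imaginaryPart a)).trans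
        (mul_le_mul_of_nonneg_left (imaginaryPart.norm_le a) h0)
      refine (norm_add_le _ _).trans ?_
      simp only [norm_mul, Complex.norm_I, Complex.norm_real, Real.norm_eq_abs]
      linarith)

lemma complexify_apply (p : selfAdjoint A →ₗ[ℝ] ℝ)
    (hp : ∀ x : selfAdjoint A, 0 ≤ (x : A) → 0 ≤ p x) (a : A) :
    complexify p hp a = (p (realPart a) : ℂ) + Complex.I * p (imaginaryPart a) := rfl

lemma complexify_coe (p : selfAdjoint A →ₗ[ℝ] ℝ)
    (hp : ∀ x : selfAdjoint A, 0 ≤ (x : A) → 0 ≤ p x) (x : selfAdjoint A) :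
    complexify p hp (x : A) = p x := by
  rw [complexify_apply, selfAdjoint.realPart_coe, selfAdjoint.imaginaryPart_coe]
  simp

end Auxiliary

/-- If every state on the fixed point subspace `A^T` of a Markov operator `T` has a unique
`T`-invariant state extension to `A`, then every `T`-invariant bounded linear functional
vanishing on `A^T` is zero. -/
theorem invariant_functional_vanishing_on_fixed_points {A : Type*} [CStarAlgebra A]
    [PartialOrder A] [StarOrderedRing A]
    (T : A →ₗ[ℂ] A) (hTpos : ∀ a : A, 0 ≤ a → 0 ≤ T a) (hT1 : T 1 = 1)
    (F : Submodule ℂ A) (hF : ∀ x, x ∈ F ↔ T x = x)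
    (hue : ∀ ψ : F →ₗ[ℂ] ℂ, (∀ x : F, 0 ≤ (x : A) → 0 ≤ ψ x) →
      ψ ⟨1, (hF 1).mpr hT1⟩ = 1 →
      ∃! φ : A →L[ℂ] ℂ, (φ 1 = 1 ∧ ∀ a : A, 0 ≤ φ (star a * a)) ∧
        (∀ a, φ (T a) = φ a) ∧ (∀ x : F, φ x = ψ x))
    (h : A →L[ℂ] ℂ) (hinv : ∀ a, h (T a) = h a) (hvanish : ∀ x ∈ F, h x = 0) :
    h = 0 := by
  have hTsa : ∀ x : selfAdjoint A, IsSelfAdjoint (T x) := fun x =>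
    IsSelfAdjoint.map' x.2 (PositiveLinearMap.mk₀ T hTpos)
  let S : selfAdjoint A →ₗ[ℝ] selfAdjoint A :=
    { toFun := fun x => ⟨T x, hTsa x⟩
      map_add' := fun x y => by ext; simp
      map_smul' := fun c x => by
        ext
        simp }
  have hSc : ∀ x, (S x : A) = T x := fun _ => rfl
  have hS : ∀ x : selfAdjoint A, 0 ≤ (x : A) → 0 ≤ (S x : A) := fun x hx => hTpos _ hx
  have hS1 : S 1 = 1 := by ext; simp [hSc, hT1]
  have hdec : ∀ a : A, T a = (S (realPart a) : A) + Complex.I • (S (imaginaryPart a) : A) := by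
    intro a
    conv_lhs => rw [← realPart_add_I_smul_imaginaryPart a]
    rw [map_add, map_smul, hSc, hSc]
  have hre : ∀ a, realPart (T a) = S (realPart a) := by
    intro a; rw [hdec a]; simp [realPart_I_smul]
  have him : ∀ a, imaginaryPart (T a) = S (imaginaryPart a) := by
    intro a; rw [hdec a]; simp [imaginaryPart_I_smul]
  have key : ∀ (u : selfAdjoint A →ₗ[ℝ] ℝ) (M : ℝ), (∀ x, |u x| ≤ M * ‖(x : A)‖) →
      (∀ x, u (S x) = u x) → (∀ x : selfAdjoint A, (x : A) ∈ F → u x = 0) → ∀ x, u x = 0 := by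
    intro u M hM hu huF x
    obtain ⟨p₀, q₀, hp₀, hq₀, hu₀⟩ := exists_pos_sub_pos u M hM
    obtain ⟨p, hp, hpS, hpl⟩ := exists_invariant_mean S hS hS1 p₀ hp₀
    obtain ⟨q, hq, hqS, hql⟩ := exists_invariant_mean S hS hS1 q₀ hq₀
    have huk : ∀ k : ℕ, ∀ x, u ((S ^ k) x) = u x := by
      intro k
      induction k with
      | zero => simp
      | succ k ih => intro x; rw [pow_succ, Module.End.mul_apply, ih, hu]
    -- `u` is its own Cesàro mean, so averaging `u = p₀ - q₀` keeps the left side.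
    have hpq : ∀ x, u x = p x - q x := by
      intro x
      refine tendsto_nhds_unique (tendsto_const_nhds (f := (Filter.hyperfilter ℕ : Filter ℕ)))
        (((hpl x).sub (hql x)).congr fun n => ?_)
      simp only [cesaro, LinearMap.smul_apply, LinearMap.sum_apply, smul_eq_mul,
          LinearMap.comp_apply, ← mul_sub, ← Finset.sum_sub_distrib, ← hu₀, huk]
      simp
      field_simp
    have h1F : (1 : A) ∈ F := (hF 1).mpr hT1
    have h1 : q 1 = p 1 := by
      have := huF 1 (by simpa using h1F)
      rw [hpq] at this
      linarith
    rcases eq_or_lt_of_le (hp 1 (by simp)) with h0 | h0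
    · have h2 := abs_le_of_pos p hp x
      have h3 := abs_le_of_pos q hq x
      rw [h1] at h3
      rw [← h0, zero_mul] at h2 h3
      rw [hpq, abs_nonpos_iff.1 h2, abs_nonpos_iff.1 h3, sub_zero]
    have hc : ((p 1 : ℝ) : ℂ) ≠ 0 := by exact_mod_cast h0.ne'
    have hstate : ∀ (r : selfAdjoint A →ₗ[ℝ] ℝ)
        (hr : ∀ x : selfAdjoint A, 0 ≤ (x : A) → 0 ≤ r x), (∀ x, r (S x) = r x) → r 1 = p 1 →
        (((p 1 : ℝ) : ℂ)⁻¹ • complexify r hr) 1 = 1 ∧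
        (∀ a : A, 0 ≤ a → 0 ≤ (((p 1 : ℝ) : ℂ)⁻¹ • complexify r hr) a) ∧
        (∀ a, (((p 1 : ℝ) : ℂ)⁻¹ • complexify r hr) (T a) =
          (((p 1 : ℝ) : ℂ)⁻¹ • complexify r hr) a) := by
      intro r hr hrS hr1
      refine ⟨?_, ?_, ?_⟩
      · have := complexify_coe r hr 1
        simp only [selfAdjoint.val_one] at this
        simp [this, hr1, hc]
      · intro a ha
        have := complexify_coe r hr ⟨a, ha.isSelfAdjoint⟩
        simp only at this
        simp only [_root_.smul_apply, this, smul_eq_mul]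
        rw [← Complex.ofReal_inv, ← Complex.ofReal_mul]
        exact_mod_cast mul_nonneg (inv_nonneg.2 h0.le) (hr _ ha)
      · intro a
        simp only [_root_.smul_apply, complexify_apply, hre, him, hrS]
    obtain ⟨hP1, hPpos, hPT⟩ := hstate p hp hpS rfl
    obtain ⟨hQ1, hQpos, hQT⟩ := hstate q hq hqS h1
    -- `F` is closed under real and imaginary parts because `T` commutes with them.
    have hFeq : ∀ y ∈ F, complexify q hq y = complexify p hp y := by
      intro y hy
      have hr : p (realPart y) = q (realPart y) := by
        have := huF (realPart y) ((hF _).2 (by rw [← hSc, ← hre, (hF y).1 hy]))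
        rw [hpq] at this; linarith
      have hi : p (imaginaryPart y) = q (imaginaryPart y) := by
        have := huF (imaginaryPart y) ((hF _).2 (by rw [← hSc, ← him, (hF y).1 hy]))
        rw [hpq] at this; linarith
      rw [complexify_apply, complexify_apply, hr, hi]
    have hPQ := (hue ((((p 1 : ℝ) : ℂ)⁻¹ • complexify p hp).toLinearMap ∘ₗ F.subtype)
      (fun y hy => hPpos _ hy) hP1).unique
      (y₁ := ((p 1 : ℝ) : ℂ)⁻¹ • complexify p hp) (y₂ := ((p 1 : ℝ) : ℂ)⁻¹ • complexify q hq)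
      ⟨⟨hP1, fun a => hPpos _ (star_mul_self_nonneg a)⟩, hPT, fun y => rfl⟩
      ⟨⟨hQ1, fun a => hQpos _ (star_mul_self_nonneg a)⟩, hQT, fun y => by
        simp [hFeq y y.2]⟩
    have hx := congrArg (fun f : A →L[ℂ] ℂ => f (x : A)) hPQ
    simp only [_root_.smul_apply, complexify_coe, smul_eq_mul] at hx
    have hx' : p x = q x := by exact_mod_cast mul_left_cancel₀ (inv_ne_zero hc) hx
    rw [hpq, hx', sub_self]
  let hR : selfAdjoint A →ₗ[ℝ] ℂ :=
    (h.toLinearMap.restrictScalars ℝ) ∘ₗ (selfAdjoint.submodule ℝ A).subtype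
  have hRa : ∀ x : selfAdjoint A, hR x = h x := fun _ => rfl
  have hz : ∀ x : selfAdjoint A, h x = 0 := by
    intro x
    apply Complex.ext
    · refine key (Complex.reLm ∘ₗ hR) ‖h‖ ?_ ?_ ?_ x
      · intro y
        exact (Complex.abs_re_le_norm _).trans (h.le_opNorm _)
      · intro y
        change (h (T y)).re = (h y).re
        rw [hinv]
      · intro y hy
        change (h y).re = 0
        rw [hvanish _ hy, Complex.zero_re]
    · refine key (Complex.imLm ∘ₗ hR) ‖h‖ ?_ ?_ ?_ x
      · intro y
        exact (Complex.abs_im_le_norm _).trans (h.le_opNorm _)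
      · intro y
        change (h (T y)).im = (h y).im
        rw [hinv]
      · intro y hy
        change (h y).im = 0
        rw [hvanish _ hy, Complex.zero_im]
  ext a
  rw [← realPart_add_I_smul_imaginaryPart a, map_add, map_smul, hz, hz]
  simp
end

section
/- Let A be a unital C*-algebra and T : A → A a Markov operator such that every state on A^T has a unique T-invariant state extension to A. Then the subspace A^T + {a − T a : a ∈ A} is dense in A. -/
/-!
Let `h` be a continuous functional vanishing on `A^T + {a - T a}`; by Hahn–Banach it suffices to
show `h = 0`. Such an `h` is `T`-invariant, and so is the real functional
`k x = re h (x + x⋆)`. The heart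
of the matter is that `2 k` is a difference `p - q` of *`T`-invariant* positive functionals
(`exists_invariant_dominating`). Since `p` and `q` agree on `A^T`, they are multiples, by
the same constant `p 1 = q 1`, of invariant extensions of one state, so `p = q` and `k = 0`.

The invariant decomposition avoids the uniqueness of the Jordan decomposition: a positive invariant
`p` with `p ≥ 2 k` on positive elements is produced directly by the M. Riesz extension theorem, for
a cone in `A × ℝ` that encodes positivity, domination and invariance simultaneously. The extension
theorem applies because of `le_of_le_smul_one_add_sub`: if `0 ≤ b ≤ t + (w - T w)`, then the Cesàro
means of `b` are asymptotically bounded by `t`, whence `k b ≤ ‖k‖ t`.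
-/

open scoped ComplexOrder

section Aux

variable {A : Type*} [CStarAlgebra A] [PartialOrder A] [StarOrderedRing A]

lemma map_star_of_positive (T : A →ₗ[ℂ] A) (hTpos : ∀ a : A, 0 ≤ a → 0 ≤ T a) (a : A) :
    T (star a) = star (T a) := by
  obtain ⟨x, hx, -, rfl⟩ := CStarAlgebra.exists_sum_four_nonneg a
  have h1 (i) : star (x i) = x i := (IsSelfAdjoint.of_nonneg (hx i)).star_eq
  have h2 (i) : star (T (x i)) = T (x i) := (IsSelfAdjoint.of_nonneg (hTpos _ (hx i))).star_eq
  simp [Fin.sum_univ_four, h1, h2]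

lemma le_norm_smul_one {a : A} (ha : IsSelfAdjoint a) : a ≤ ‖a‖ • (1 : A) := by
  rw [← Algebra.algebraMap_eq_smul_one]
  exact ha.le_algebraMap_norm_self

/-- The coboundary `w - T w` is invisible to a `T`-invariant functional `k`, also in order
estimates: averaging the inequality over the iterates of `T` makes its contribution `O(1/n)`. -/
lemma le_of_le_smul_one_add_sub (T : A →ₗ[ℂ] A) (hTpos : ∀ a : A, 0 ≤ a → 0 ≤ T a) (hT1 : T 1 = 1)
    (k : A →ₗ[ℝ] ℝ) (C : ℝ) (hC : 0 ≤ C) (hk : ∀ x, k x ≤ C * ‖x‖) (hkT : ∀ x, k (T x) = k x)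
    (t : ℝ) (ht : 0 ≤ t) (b w : A) (hb : 0 ≤ b) (hw : IsSelfAdjoint w)
    (h : b ≤ t • (1 : A) + (w - T w)) : k b ≤ C * t := by
  have hmono (x y : A) (hxy : x ≤ y) : T x ≤ T y := by
    have := hTpos _ (sub_nonneg.2 hxy)
    rwa [map_sub, sub_nonneg] at this
  have hTs (r : ℝ) : T (r • (1 : A)) = r • (1 : A) := by
    rw [LinearMap.map_smul_of_tower, hT1]
  -- `s` is the sum `b + T b + ⋯ + T^(n-1) b`, and `v = T^n w`
  have sums : ∀ n : ℕ, ∃ s v : A, 0 ≤ s ∧ k s = n * k b ∧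
      s ≤ (n * t) • (1 : A) + (w - v) ∧ -v ≤ ‖w‖ • (1 : A) := by
    intro n
    induction n with
    | zero => exact ⟨0, w, le_rfl, by simp, by simp, by simpa using le_norm_smul_one hw.neg⟩
    | succ n ih =>
      obtain ⟨s, v, h0, h1, h2, h3⟩ := ih
      refine ⟨T s + b, T v, add_nonneg (hTpos _ h0) hb, ?_, ?_, ?_⟩
      · rw [map_add, hkT, h1]; push_cast; ring
      · have := add_le_add (hmono _ _ h2) h
        rw [map_add, map_sub, hTs] at this
        refine this.trans_eq ?_
        push_cast
        rw [add_mul, one_mul, add_smul]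
        abel
      · have := hmono _ _ h3
        rwa [map_neg, hTs] at this
  have hone : ‖(1 : A)‖ ≤ 1 := by
    rcases subsingleton_or_nontrivial A with _ | _
    · simp [Subsingleton.elim (1 : A) 0]
    · simp
  have bound : ∀ n : ℕ, n * (k b - C * t) ≤ C * (2 * ‖w‖) := by
    intro n
    obtain ⟨s, v, h0, h1, h2, h3⟩ := sums n
    have h4 : s ≤ (n * t + 2 * ‖w‖) • (1 : A) := by
      calc s ≤ (n * t) • (1 : A) + (w + -v) := by rwa [← sub_eq_add_neg]
        _ ≤ (n * t) • (1 : A) + (‖w‖ • (1 : A) + ‖w‖ • (1 : A)) := by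
          gcongr
          exact le_norm_smul_one hw
        _ = _ := by rw [← add_smul, ← add_smul]; ring_nf
    have h5 := CStarAlgebra.norm_le_norm_of_nonneg_of_le h0 h4
    have hpos : 0 ≤ n * t + 2 * ‖w‖ := by positivity
    rw [norm_smul, Real.norm_of_nonneg hpos] at h5
    have h6 : ‖s‖ ≤ n * t + 2 * ‖w‖ := h5.trans (mul_le_of_le_one_right hpos hone)
    have h7 := (hk s).trans (mul_le_mul_of_nonneg_left h6 hC)
    rw [h1] at h7
    linarith
  by_contra! hlt
  obtain ⟨n, hn⟩ := exists_nat_gt (C * (2 * ‖w‖) / (k b - C * t))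
  rw [div_lt_iff₀ (by linarith)] at hn
  linarith [bound n]

/-- A bounded `T`-invariant functional `k` is dominated, up to the factor `2`, by a positive
hermitian `T`-invariant functional. -/
lemma exists_invariant_dominating (T : A →ₗ[ℂ] A) (hTpos : ∀ a : A, 0 ≤ a → 0 ≤ T a)
    (hT1 : T 1 = 1) (k : A →ₗ[ℝ] ℝ) (C : ℝ) (hC : 0 ≤ C) (hk : ∀ x, k x ≤ C * ‖x‖)
    (hkT : ∀ x, k (T x) = k x) :
    ∃ p : A →ₗ[ℝ] ℝ, (∀ x, p (star x) = p x) ∧ (∀ x, p (T x) = p x) ∧ (∀ x, 0 ≤ x → 0 ≤ p x) ∧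
      ∀ x, 0 ≤ x → 2 * k x ≤ p x := by
  -- The pairs `(x, r)` for which the requirements on `p`, with `p 1 ≤ 2 * C`, force `p x ≤ r`.
  let s : PointedCone ℝ (A × ℝ) :=
    { carrier := {z | ∃ (t : ℝ) (b w : A), 0 ≤ t ∧ 0 ≤ b ∧ IsSelfAdjoint w ∧
        z.1 + star z.1 ≤ t • (1 : A) - b + (w - T w) ∧ C * t - k b ≤ z.2}
      zero_mem' := ⟨0, 0, 0, le_rfl, le_rfl, .zero _, by simp, by simp⟩
      add_mem' := by
        rintro z z' ⟨t, b, w, h1, h2, h3, h4, h5⟩ ⟨t', b', w', h1', h2', h3', h4', h5'⟩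
        refine ⟨t + t', b + b', w + w', add_nonneg h1 h1', add_nonneg h2 h2', h3.add h3', ?_, ?_⟩
        · calc (z + z').1 + star (z + z').1 = (z.1 + star z.1) + (z'.1 + star z'.1) := by
                simp only [Prod.fst_add, star_add]; abel
            _ ≤ _ := add_le_add h4 h4'
            _ = _ := by rw [add_smul, map_add]; abel
        · simp only [map_add, Prod.snd_add]; linarith
      smul_mem' := by
        rintro ⟨c, hc⟩ z ⟨t, b, w, h1, h2, h3, h4, h5⟩
        refine ⟨c * t, c • b, c • w, mul_nonneg hc h1, smul_nonneg hc h2,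
          (IsSelfAdjoint.all c).smul h3, ?_, ?_⟩
        · calc (c • z).1 + star (c • z).1 = c • (z.1 + star z.1) := by simp
            _ ≤ c • (t • (1 : A) - b + (w - T w)) := smul_le_smul_of_nonneg_left h4 hc
            _ = _ := by
              rw [LinearMap.map_smul_of_tower, mul_smul]
              simp only [smul_add, smul_sub]
        · change C * (c * t) - k (c • b) ≤ c * z.2
          rw [map_smul, smul_eq_mul]
          nlinarith }
  have mem_s (x : A) (r t : ℝ) (b w : A) (h1 : 0 ≤ t) (h2 : 0 ≤ b) (h3 : IsSelfAdjoint w)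
      (h4 : x + star x ≤ t • (1 : A) - b + (w - T w)) (h5 : C * t - k b ≤ r) : (x, r) ∈ s :=
    ⟨t, b, w, h1, h2, h3, h4, h5⟩
  let f : A × ℝ →ₗ.[ℝ] ℝ :=
    { domain := LinearMap.ker (LinearMap.fst ℝ A ℝ)
      toFun := (LinearMap.snd ℝ A ℝ).domRestrict _ }
  obtain ⟨g, hgf, hgs⟩ := riesz_extension s f
    (by
      rintro ⟨⟨x, r⟩, hx⟩ ⟨t, b, w, h1, h2, h3, h4, h5⟩
      have hx0 : x = 0 := by simpa [f] using hx
      subst hx0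
      change 0 ≤ r
      have h6 : b ≤ t • (1 : A) + (w - T w) := by
        rw [← sub_nonneg]
        convert h4 using 1
        · simp
        · abel
      have := le_of_le_smul_one_add_sub T hTpos hT1 k C hC hk hkT t h1 b w h2 h3 h6
      simp only at h5
      linarith)
    (by
      rintro ⟨x, r⟩
      refine ⟨⟨(0, C * ‖x + star x‖ - r), by simp [f]⟩, ?_⟩
      have := mem_s x (C * ‖x + star x‖) ‖x + star x‖ 0 0 (norm_nonneg _) le_rfl (.zero _)
        (by simpa using le_norm_smul_one (IsSelfAdjoint.add_star_self x)) (by simp)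
      simpa using this)
  have hg (x : A) (r : ℝ) : g (x, r) = g (x, 0) + r := by
    have h1 : g (0, r) = r := hgf ⟨(0, r), by simp [f]⟩
    have h2 : ((x, r) : A × ℝ) = (x, 0) + (0, r) := by simp
    rw [h2, map_add, h1]
  let p : A →ₗ[ℝ] ℝ := -(g.comp (LinearMap.inl ℝ A ℝ))
  have hp (x : A) (r : ℝ) (hx : (x, r) ∈ s) : p x ≤ r := by
    have := hgs _ hx
    rw [hg] at this
    change -g (x, 0) ≤ r
    linarith
  have hpstar (x : A) : p (x - star x) ≤ 0 :=
    hp _ _ (mem_s _ _ 0 0 0 le_rfl le_rfl (.zero _) (by simp) (by simp))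
  have hpT (x : A) : p (x - T x) ≤ 0 := by
    refine hp _ _ (mem_s _ _ 0 0 (x + star x) le_rfl le_rfl (IsSelfAdjoint.add_star_self x)
      (le_of_eq ?_) (by simp))
    rw [map_add, map_star_of_positive T hTpos, star_sub]
    simp only [zero_smul, sub_zero, zero_add]
    abel
  refine ⟨p, fun x ↦ ?_, fun x ↦ ?_, fun x hx ↦ ?_, fun x hx ↦ ?_⟩
  · have h1 := hpstar x
    have h2 := hpstar (star x)
    simp only [star_star, map_sub] at h1 h2
    linarith
  · have h1 := hpT x
    have h2 := hpT (-x)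
    simp only [map_neg, map_sub] at h1 h2
    linarith
  · have hsx : star x = x := (IsSelfAdjoint.of_nonneg hx).star_eq
    have := hp (-x) 0 (mem_s _ _ 0 0 0 le_rfl le_rfl (.zero _)
      (by simpa [hsx] using (neg_nonpos.2 hx).trans hx) (by simp))
    rw [map_neg] at this
    linarith
  · have hsx : star x = x := (IsSelfAdjoint.of_nonneg hx).star_eq
    have := hp (-x) (-(k (x + x))) (mem_s _ _ 0 (x + x) 0 le_rfl (add_nonneg hx hx) (.zero _)
      (by simp [hsx]) (by simp))
    rw [map_neg, map_add] at this
    linarith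

/-- The complexification of a positive hermitian real functional is a continuous positive complex
functional. -/
lemma exists_complexification (p : A →ₗ[ℝ] ℝ) (hstar : ∀ x, p (star x) = p x)
    (hpos : ∀ x, 0 ≤ x → 0 ≤ p x) :
    ∃ φ : A →L[ℂ] ℂ, (∀ x, φ x = p x - Complex.I * p (Complex.I • x)) ∧
      (∀ x, IsSelfAdjoint x → φ x = p x) ∧ ∀ x, 0 ≤ x → 0 ≤ φ x := by
  let φ : A →ₗ[ℂ] ℂ := Module.Dual.extendRCLike (𝕜 := ℂ) p
  have h1 (x : A) : φ x = p x - Complex.I * p (Complex.I • x) :=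
    Module.Dual.extendRCLike_apply (𝕜 := ℂ) p x
  have h2 (x : A) (hx : IsSelfAdjoint x) : φ x = p x := by
    have h3 := hstar (Complex.I • x)
    rw [star_smul, hx.star_eq, Complex.star_def, Complex.conj_I, neg_smul, map_neg] at h3
    have h4 : p (Complex.I • x) = 0 := by linarith
    simp [h1, h4]
  have h3 (x : A) (hx : 0 ≤ x) : 0 ≤ φ x := by
    rw [h2 x (.of_nonneg hx)]
    exact_mod_cast hpos x hx
  exact ⟨⟨φ, map_continuous (PositiveLinearMap.mk₀ φ h3)⟩, h1, h2, h3⟩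

lemma eq_zero_of_map_one (p : A →ₗ[ℝ] ℝ) (hstar : ∀ x, p (star x) = p x)
    (hpos : ∀ x, 0 ≤ x → 0 ≤ p x) (h1 : p 1 = 0) (x : A) : p x = 0 := by
  have h2 (y : A) (hy : IsSelfAdjoint y) : p y ≤ 0 := by
    have := hpos _ (sub_nonneg.2 (le_norm_smul_one hy))
    rw [map_sub, map_smul, h1, smul_zero] at this
    linarith
  have h3 := h2 _ (IsSelfAdjoint.add_star_self x)
  have h4 := h2 _ (IsSelfAdjoint.add_star_self x).neg
  rw [map_neg, map_add, hstar] at h4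
  rw [map_add, hstar] at h3
  linarith

end Aux

/-- Hahn–Banach: a complex subspace annihilated only by the zero functional is dense. -/
lemma dense_of_annihilator {A : Type*} [NormedAddCommGroup A] [NormedSpace ℂ A]
    (M : Submodule ℂ A)
    (hM : ∀ h : A →L[ℂ] ℂ, (∀ x ∈ M, h x = 0) → ∀ x, h x = 0) : Dense (M : Set A) := by
  intro x
  by_contra hx
  obtain ⟨h, u, hu, hux⟩ := RCLike.geometric_hahn_banach_closed_point (𝕜 := ℂ)
    (s := closure (M : Set A)) ((M.restrictScalars ℝ).convex.closure) isClosed_closure hx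
  have h0 : ∀ y ∈ M, h y = 0 := by
    intro y hy
    by_contra hne
    have := hu _ (subset_closure (M.smul_mem ((u : ℂ) * (h y)⁻¹) hy))
    rw [map_smul, smul_eq_mul, mul_assoc, inv_mul_cancel₀ hne] at this
    simp at this
  have h1 := hu 0 (subset_closure M.zero_mem)
  rw [hM h h0 x] at hux
  rw [map_zero] at h1
  exact lt_asymm h1 hux

/-- If every state on the fixed point subspace `A^T` of a Markov operator `T` has a unique
`T`-invariant state extension to `A`, then `A^T + {a - T a : a ∈ A}` is dense in `A`. -/
theorem dense_of_unique_invariant_extension {A : Type*} [CStarAlgebra A] [PartialOrder A]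
    [StarOrderedRing A]
    (T : A →ₗ[ℂ] A) (hTpos : ∀ a : A, 0 ≤ a → 0 ≤ T a) (hT1 : T 1 = 1)
    (F : Submodule ℂ A) (hF : ∀ x, x ∈ F ↔ T x = x)
    (hue : ∀ ψ : F →ₗ[ℂ] ℂ, (∀ x : F, 0 ≤ (x : A) → 0 ≤ ψ x) →
      ψ ⟨1, (hF 1).mpr hT1⟩ = 1 →
      ∃! φ : A →L[ℂ] ℂ, (φ 1 = 1 ∧ ∀ a : A, 0 ≤ φ (star a * a)) ∧
        (∀ a, φ (T a) = φ a) ∧ (∀ x : F, φ x = ψ x)) :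
    Dense {y : A | ∃ f ∈ F, ∃ a, y = f + (a - T a)} := by
  have hTstar := map_star_of_positive T hTpos
  have unique (p q : A →ₗ[ℝ] ℝ) (hps : ∀ x, p (star x) = p x) (hpT : ∀ x, p (T x) = p x)
      (hp : ∀ x, 0 ≤ x → 0 ≤ p x) (hqs : ∀ x, q (star x) = q x) (hqT : ∀ x, q (T x) = q x)
      (hq : ∀ x, 0 ≤ x → 0 ≤ q x) (hpq : ∀ x ∈ F, p x = q x) (x : A) : p x = q x := by
    have hpq1 : p 1 = q 1 := hpq 1 ((hF 1).mpr hT1)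
    rcases eq_or_ne (p 1) 0 with hc | hc
    · rw [eq_zero_of_map_one p hps hp hc, eq_zero_of_map_one q hqs hq (hpq1 ▸ hc)]
    obtain ⟨φ, hφ, hφs, hφp⟩ := exists_complexification p hps hp
    obtain ⟨χ, hχ, hχs, hχp⟩ := exists_complexification q hqs hq
    have hcC : (p 1 : ℂ) ≠ 0 := by exact_mod_cast hc
    have hcpos : (0 : ℂ) ≤ (p 1 : ℂ)⁻¹ := by
      rw [← Complex.ofReal_inv]
      exact_mod_cast inv_nonneg.2 (hp 1 zero_le_one)
    have hφ1 : φ 1 = p 1 := hφs 1 (.one _)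
    have hχ1 : χ 1 = p 1 := by rw [hχs 1 (.one _), hpq1]
    have heq := (hue ((p 1 : ℂ)⁻¹ • (φ : A →ₗ[ℂ] ℂ).comp F.subtype)
      (fun x hx ↦ mul_nonneg hcpos (hφp _ hx))
      (by simp [hφ1, hcC])).unique
      (y₁ := (p 1 : ℂ)⁻¹ • φ) (y₂ := (p 1 : ℂ)⁻¹ • χ)
      ⟨⟨by simp [hφ1, hcC], fun a ↦ mul_nonneg hcpos (hφp _ (star_mul_self_nonneg a))⟩,
        fun a ↦ by
          simp only [_root_.smul_apply, hφ, ← LinearMap.map_smul T, hpT], fun x ↦ rfl⟩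
      ⟨⟨by simp [hχ1, hcC], fun a ↦ mul_nonneg hcpos (hχp _ (star_mul_self_nonneg a))⟩,
        fun a ↦ by
          simp only [_root_.smul_apply, hχ, ← LinearMap.map_smul T, hqT],
        fun x ↦ by
          change (p 1 : ℂ)⁻¹ * χ x = (p 1 : ℂ)⁻¹ * φ x
          rw [hφ, hχ, hpq _ x.2, hpq _ (F.smul_mem _ x.2)]⟩
    have h1 : φ x = χ x := by
      have := congrArg (fun ξ : A →L[ℂ] ℂ ↦ ξ x) heq
      simpa [hcC] using this
    have h2 := congrArg Complex.re h1
    simpa [hφ, hχ] using h2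
  have real_part (h : A →L[ℂ] ℂ) (hT : ∀ x, h (T x) = h x) (h0 : ∀ x ∈ F, h x = 0) (x : A) :
      (h (x + star x)).re = 0 := by
    let k : A →ₗ[ℝ] ℝ :=
      { toFun x := (h (x + star x)).re
        map_add' x y := by simp only [star_add, map_add, Complex.add_re]; ring
        map_smul' r x := by
          have : r • x + star (r • x) = (r : ℂ) • (x + star x) := by simp
          rw [this, map_smul]
          simp }
    have hk (x) : k x = (h (x + star x)).re := rfl
    have hks (x) : k (star x) = k x := by rw [hk, hk, star_star, add_comm]
    have hkT (x) : k (T x) = k x := by rw [hk, hk, ← hTstar, ← map_add, hT]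
    have hkb (x) : k x ≤ (‖h‖ * 2) * ‖x‖ := by
      calc k x ≤ ‖h (x + star x)‖ := Complex.re_le_norm _
        _ ≤ ‖h‖ * ‖x + star x‖ := h.le_opNorm _
        _ ≤ ‖h‖ * (‖x‖ + ‖star x‖) := by gcongr; exact norm_add_le _ _
        _ = _ := by rw [norm_star]; ring
    obtain ⟨p, hps, hpT, hp, hpk⟩ :=
      exists_invariant_dominating T hTpos hT1 k _ (by positivity) hkb hkT
    have := unique p (p - (2 : ℝ) • k) hps hpT hp (by simp [hps, hks]) (by simp [hpT, hkT])
      (fun x hx ↦ by simpa using hpk x hx)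
      (fun x hx ↦ by
        have hsx : star x ∈ F := by rw [hF, hTstar, (hF x).1 hx]
        have : k x = 0 := by rw [hk, h0 _ (F.add_mem hx hsx), Complex.zero_re]
        simp [this]) x
    have h3 : k x = 0 := by
      simp only [LinearMap.sub_apply, LinearMap.smul_apply, smul_eq_mul] at this
      linarith
    exact h3
  let M : Submodule ℂ A := F ⊔ LinearMap.range (LinearMap.id - T)
  have hM : {y : A | ∃ f ∈ F, ∃ a, y = f + (a - T a)} = M := by
    ext y
    simp [M, Submodule.mem_sup, eq_comm]
  rw [hM]
  refine dense_of_annihilator M fun h hh ↦ ?_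
  have h0 : ∀ x ∈ F, h x = 0 := fun x hx ↦ hh x (Submodule.mem_sup_left hx)
  have hT (x) : h (T x) = h x := by
    have := hh (x - T x) (Submodule.mem_sup_right ⟨x, by simp⟩)
    rw [map_sub, sub_eq_zero] at this
    exact this.symm
  -- the real part of `-i h` is the imaginary part of `h`
  have hsum (x : A) : h (x + star x) = 0 := by
    apply Complex.ext
    · exact real_part h hT h0 x
    · have := real_part ((-Complex.I) • h) (by simp [hT]) (fun x hx ↦ by simp [h0 x hx]) x
      simpa using this
  intro x
  have h1 := hsum x
  have h2 := hsum (Complex.I • x)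
  rw [star_smul, Complex.star_def, Complex.conj_I, neg_smul, ← sub_eq_add_neg, ← smul_sub, map_smul,
    smul_eq_mul, mul_eq_zero, or_iff_right Complex.I_ne_zero, map_sub] at h2
  rw [map_add] at h1
  linear_combination (h1 + h2) / 2
end
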